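/- arXiv:1404.2858 — 2 statements merged into one kernel-verified Lean document; each statement's English description precedes it below -/
import Mathlib

section
/- Identify 𝒫(ℕ) with the Cantor space 2^ℕ with the product topology via characteristic functions. Let 𝒦 be a nonempty family of compact subsets of 𝒫(ℕ) and suppose that ⋃𝒦 generates a (proper) filter 𝒢 on ℕ, i.e., 𝒢 = { A ⊆ ℕ | A ⊇ G₀ ∩ … ∩ G_{k−1} for some finitely many G₀, …, G_{k−1} ∈ ⋃𝒦 }. Then there is a family 𝒦′ of compact subsets of 𝒫(ℕ), of cardinality at most max(|𝒦|, ℵ₀), each of whose members is upward closed under ⊆ and contained in 𝒢, such that 𝒢 = ⋃𝒦′. -/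
/-- The characteristic function identification of `𝒫(ℕ)` with Cantor space `ℕ → Bool`. -/
noncomputable def chi (A : Set ℕ) : ℕ → Bool :=
  fun n => @decide (n ∈ A) (Classical.dec _)

/-!
For finitely many compact sets `K₀, …, Kₙ₋₁` of subsets of `α`, the supersets of the intersections
`G₀ ∩ … ∩ Gₙ₋₁` with `Gᵢ ∈ Kᵢ` form an upward closed set. Under the identification of subsets with
points of `α → Bool` it is the image of `K₀ × … × Kₙ₋₁ × (α → Bool)` under the continuous map
`(g, x) ↦ (⨅ i, gᵢ) ⊔ x`, hence compact. The generated filter is the union of these sets over all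
finite sequences from the given family `𝒦`, and there are at most `max |𝒦| ℵ₀` such sequences.
-/

open Set
open scoped SetFamily Cardinal

theorem coe_upperClosure_eq_sups_univ {L : Type*} [SemilatticeSup L] (s : Set L) :
    (upperClosure s : Set L) = s ⊻ univ := by
  ext x
  simp only [SetLike.mem_coe, mem_upperClosure, mem_sups, mem_univ, true_and]
  exact exists_congr fun a => and_congr_right fun _ =>
    ⟨fun h => ⟨x, sup_of_le_right h⟩, fun ⟨_, h⟩ => h ▸ le_sup_left⟩

section Compactness

instance {L : Type*} [TopologicalSpace L] [DiscreteTopology L] [Min L] : ContinuousInf L :=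
  ⟨continuous_of_discreteTopology⟩

instance {L : Type*} [TopologicalSpace L] [DiscreteTopology L] [Max L] : ContinuousSup L :=
  ⟨continuous_of_discreteTopology⟩

instance {ι : Type*} {L : ι → Type*} [∀ i, TopologicalSpace (L i)] [∀ i, Min (L i)]
    [∀ i, ContinuousInf (L i)] : ContinuousInf (∀ i, L i) :=
  ⟨continuous_pi fun i =>
    ((continuous_apply i).comp continuous_fst).inf ((continuous_apply i).comp continuous_snd)⟩

instance {ι : Type*} {L : ι → Type*} [∀ i, TopologicalSpace (L i)] [∀ i, Max (L i)]
    [∀ i, ContinuousSup (L i)] : ContinuousSup (∀ i, L i) :=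
  ⟨continuous_pi fun i =>
    ((continuous_apply i).comp continuous_fst).sup ((continuous_apply i).comp continuous_snd)⟩

variable {L : Type*} [TopologicalSpace L] {s t : Set L}

theorem isCompact_infs [SemilatticeInf L] [ContinuousInf L] (hs : IsCompact s)
    (ht : IsCompact t) : IsCompact (s ⊼ t) := by
  rw [← image_inf_prod, ← image_prod]
  exact (hs.prod ht).image continuous_inf

theorem isCompact_sups [SemilatticeSup L] [ContinuousSup L] (hs : IsCompact s)
    (ht : IsCompact t) : IsCompact (s ⊻ t) := by
  rw [← image_sup_prod, ← image_prod]
  exact (hs.prod ht).image continuous_sup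

theorem isCompact_upperClosure [SemilatticeSup L] [ContinuousSup L] [CompactSpace L]
    (hs : IsCompact s) : IsCompact (upperClosure s : Set L) := by
  rw [coe_upperClosure_eq_sups_univ]
  exact isCompact_sups hs isCompact_univ

end Compactness

section ListInfs

variable {ι L : Type*} [SemilatticeInf L] [OrderTop L] {K : ι → Set L} {l m : List ι} {a b : L}

/-- The set of all meets `a₀ ⊓ … ⊓ aₙ₋₁` with `aⱼ ∈ K iⱼ`, for a list `[i₀, …, iₙ₋₁]` of indices;
these are the finite meets that describe a generated filter. Indices may repeat, so that several
elements can be drawn from the same `K i`, and the empty meet is `⊤`. -/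
def listInfs (K : ι → Set L) : List ι → Set L
  | [] => {⊤}
  | i :: l => K i ⊼ listInfs K l

theorem inf_mem_listInfs_append (ha : a ∈ listInfs K l) (hb : b ∈ listInfs K m) :
    a ⊓ b ∈ listInfs K (l ++ m) := by
  induction l generalizing a with
  | nil => rwa [mem_singleton_iff.mp ha, top_inf_eq]
  | cons i l ih =>
    obtain ⟨c, hc, d, hd, rfl⟩ := ha
    exact inf_assoc c d b ▸ inf_mem_infs hc (ih hd)

theorem listInfs_subset {s : Set L} (htop : ⊤ ∈ s) (hinf : InfClosed s) (hK : ∀ i, K i ⊆ s)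
    (l : List ι) : listInfs K l ⊆ s := by
  induction l with
  | nil => exact singleton_subset_iff.mpr htop
  | cons i l ih => exact infs_subset_iff.mpr fun a ha b hb => hinf (hK i ha) (ih hb)

theorem image_listInfs {M F : Type*} [SemilatticeInf M] [OrderTop M] [FunLike F L M]
    [InfTopHomClass F L M] (f : F) (K : ι → Set L) (l : List ι) :
    f '' listInfs K l = listInfs (fun i => f '' K i) l := by
  induction l with
  | nil => simp only [listInfs, image_singleton, map_top]
  | cons i l ih => simp only [listInfs, image_infs, ih]

theorem isCompact_listInfs [TopologicalSpace L] [ContinuousInf L] (hK : ∀ i, IsCompact (K i))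
    (l : List ι) : IsCompact (listInfs K l) := by
  induction l with
  | nil => exact isCompact_singleton
  | cons i l ih => exact isCompact_infs (hK i) ih

theorem isCompact_image_upperClosure_listInfs {M : Type*} [Lattice M] [OrderTop M]
    [TopologicalSpace M] [ContinuousInf M] [ContinuousSup M] [CompactSpace M] (e : L ≃o M)
    (hK : ∀ i, IsCompact (e '' K i)) (l : List ι) :
    IsCompact (e '' upperClosure (listInfs K l)) := by
  rw [← UpperSet.coe_map, ← upperClosure_image, image_listInfs]
  exact isCompact_upperClosure (isCompact_listInfs hK l)

end ListInfs

theorem mem_generate_iff_exists_finset {α : Type*} {S : Set (Set α)} {A : Set α} :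
    A ∈ Filter.generate S ↔ ∃ s : Finset (Set α), ↑s ⊆ S ∧ ⋂₀ (s : Set (Set α)) ⊆ A := by
  rw [Filter.mem_generate_iff, ← exists_finite_iff_finset (p := fun s => s ⊆ S ∧ ⋂₀ s ⊆ A)]
  exact exists_congr fun _ => and_left_comm

theorem mem_generate_iUnion_iff {ι α : Type*} {K : ι → Set (Set α)} {A : Set α} :
    A ∈ Filter.generate (⋃ i, K i) ↔ ∃ l, A ∈ upperClosure (listInfs K l) := by
  constructor
  · intro hA
    induction hA with
    | @basic A hA =>
      obtain ⟨i, hi⟩ := mem_iUnion.mp hA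
      exact ⟨[i], A, ⟨A, hi, univ, rfl, inter_univ A⟩, le_rfl⟩
    | univ => exact ⟨[], univ, rfl, le_rfl⟩
    | superset _ hAB ih =>
      obtain ⟨l, hl⟩ := ih
      exact ⟨l, (upperClosure _).upper hAB hl⟩
    | inter _ _ ihA ihB =>
      obtain ⟨l, C, hC, hCA⟩ := ihA
      obtain ⟨m, D, hD, hDB⟩ := ihB
      exact ⟨l ++ m, C ⊓ D, inf_mem_listInfs_append hC hD, inf_le_inf hCA hDB⟩
  · rintro ⟨l, C, hC, hCA⟩
    have hK : ∀ i, K i ⊆ (Filter.generate (⋃ i, K i)).sets := fun i _ hB =>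
      Filter.mem_generate_of_mem (mem_iUnion_of_mem i hB)
    exact Filter.mem_of_superset
      (listInfs_subset Filter.univ_mem (fun _ h _ => Filter.inter_mem h) hK l hC) hCA

/-- The identification of `𝒫(α)` with `α → Bool` via characteristic functions, as an isomorphism
of orders, through which meets and upper closures are computed in the topological lattice
`α → Bool`. -/
noncomputable def boolIndicatorOrderIso (α : Type*) : Set α ≃o (α → Bool) where
  toFun := boolIndicator
  invFun f := f ⁻¹' {true}
  left_inv := preimage_boolIndicator_true
  right_inv f := by
    ext x
    rw [Bool.eq_iff_iff, ← mem_iff_boolIndicator, mem_preimage, mem_singleton_iff]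
  map_rel_iff' {A B} := by
    simp only [Equiv.coe_fn_mk, Pi.le_def, Bool.le_iff_imp, ← mem_iff_boolIndicator]
    rfl

theorem exists_upwardClosed_compact_generating_family_general {α : Type*}
    (𝒦 : Set (Set (Set α))) (hcomp : ∀ K ∈ 𝒦, IsCompact (boolIndicator '' K))
    (𝒢 : Set (Set α))
    (h𝒢 : 𝒢 = {A : Set α | ∃ s : Finset (Set α), ↑s ⊆ ⋃₀ 𝒦 ∧ ⋂₀ (s : Set (Set α)) ⊆ A}) :
    ∃ 𝒦' : Set (Set (Set α)),
      #𝒦' ≤ max #𝒦 ℵ₀ ∧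
      (∀ K ∈ 𝒦', IsCompact (boolIndicator '' K)) ∧
      (∀ K ∈ 𝒦', ∀ A ∈ K, ∀ B : Set α, A ⊆ B → B ∈ K) ∧
      (∀ K ∈ 𝒦', K ⊆ 𝒢) ∧
      𝒢 = ⋃₀ 𝒦' := by
  let U (l : List 𝒦) : Set (Set α) := upperClosure (listInfs Subtype.val l)
  have hunion : 𝒢 = ⋃₀ range U := by
    ext A
    rw [h𝒢, mem_ofPred_eq, ← mem_generate_iff_exists_finset, sUnion_eq_iUnion,
      mem_generate_iUnion_iff, sUnion_range, mem_iUnion]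
    simp only [U, SetLike.mem_coe]
  refine ⟨range U, ?_, forall_mem_range.mpr fun l => ?_,
    forall_mem_range.mpr fun l A hA B hAB => ?_,
    fun K hK => hunion ▸ subset_sUnion_of_mem hK, hunion⟩
  · exact Cardinal.mk_range_le.trans (max_comm ℵ₀ #𝒦 ▸ Cardinal.mk_list_le_max 𝒦)
  · exact isCompact_image_upperClosure_listInfs (boolIndicatorOrderIso α)
      (fun K : 𝒦 => hcomp K K.2) l
  · exact (upperClosure _).upper hAB hA

theorem chi_eq_boolIndicator : chi = boolIndicator :=
  rfl

/-- If a nonempty family `𝒦` of compact subsets of `𝒫(ℕ)` is such that `⋃𝒦` generates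
a proper filter `𝒢`, then `𝒢` is the union of a family `𝒦'` of at most `max(|𝒦|, ℵ₀)` many
compact, upward closed subsets of `𝒢`. -/
theorem exists_upwardClosed_compact_generating_family
    (𝒦 : Set (Set (Set ℕ))) (hne : 𝒦.Nonempty)
    (hcomp : ∀ K ∈ 𝒦, IsCompact (chi '' K))
    (𝒢 : Set (Set ℕ))
    (h𝒢 : 𝒢 = {A : Set ℕ |
      ∃ s : Finset (Set ℕ), ↑s ⊆ ⋃₀ 𝒦 ∧ ⋂₀ (s : Set (Set ℕ)) ⊆ A})
    (hproper : ∅ ∉ 𝒢) :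
    ∃ 𝒦' : Set (Set (Set ℕ)),
      Cardinal.mk 𝒦' ≤ max (Cardinal.mk 𝒦) Cardinal.aleph0 ∧
      (∀ K ∈ 𝒦', IsCompact (chi '' K)) ∧
      (∀ K ∈ 𝒦', ∀ A ∈ K, ∀ B : Set ℕ, A ⊆ B → B ∈ K) ∧
      (∀ K ∈ 𝒦', K ⊆ 𝒢) ∧
      𝒢 = ⋃₀ 𝒦' := by
  simp only [chi_eq_boolIndicator] at hcomp ⊢
  exact exists_upwardClosed_compact_generating_family_general 𝒦 hcomp 𝒢 h𝒢
end

section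
/- Identify 𝒫(ℕ) with the Cantor space 2^ℕ with the product topology via characteristic functions. Let τ be a partial function from (finite subsets of ℕ) × ℕ to ℕ, and for a finite subset t ⊆ ℕ, G ⊆ ℕ, and m ∈ ℕ define g_{t,G}(m) ∈ ℕ ∪ {∞} as the minimum of { τ(s,m) | s a finite subset of ℕ strictly end-extending t with s ∖ t ⊆ G and (s,m) ∈ dom(τ) }, or ∞ if this set is empty. Then for every f : ℕ → ℕ, the set ℋ = { H ⊆ ℕ | there is a finite t ⊆ ℕ such that g_{t, ℕ∖H}(m) ≥ f(m) for all but finitely many m } is the union of countably many compact subsets of 𝒫(ℕ) (i.e., ℋ is σ-compact). -/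
/-- `s` strictly end-extends `t`: `t ⊆ s`, `s ≠ t`, and every new element is above all of `t`. -/
def StrictEndExt (t s : Finset ℕ) : Prop :=
  t ⊆ s ∧ s ≠ t ∧ ∀ a ∈ s, a ∉ t → ∀ b ∈ t, b < a

/-- `gFn τ t G m` is the minimum of the values `τ(s, m)` over finite sets `s` strictly
end-extending `t` with `s \ t ⊆ G` and `(s, m)` in the domain of `τ`; it is `⊤ = ∞` if
there is no such `s`. -/
noncomputable def gFn (τ : Finset ℕ × ℕ → Option ℕ) (t : Finset ℕ) (G : Set ℕ) (m : ℕ) :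
    ℕ∞ :=
  sInf {x : ℕ∞ | ∃ (s : Finset ℕ) (v : ℕ), StrictEndExt t s ∧
    (∀ a ∈ s, a ∉ t → a ∈ G) ∧ τ (s, m) = some v ∧ x = (v : ℕ∞)}

/-!
The inequality `c ≤ g_{t, ℕ∖H}(m)` says exactly that `H` meets `s ∖ t` for every strict
end-extension `s` of `t` with `τ(s, m) < c`. Meeting a fixed finite set is a closed condition on
`H`, so for fixed `t` and `m₀` the sets `H` with `g_{t, ℕ∖H}(m) ≥ f(m)` for all `m ≥ m₀` form a
closed, hence compact, subset of Cantor space. There are only countably many pairs `(t, m₀)`.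
-/

open Set

section Image

variable {X Y : Type*} [TopologicalSpace Y] {e : X → Y}

theorem isClosed_image_iInter {ι : Sort*} {S : ι → Set X} (he : Function.Bijective e)
    (hS : ∀ i, IsClosed (e '' S i)) : IsClosed (e '' ⋂ i, S i) := by
  rw [image_iInter he]
  exact isClosed_iInter hS

theorem exists_iUnion_eq_of_isSigmaCompact_image (he : Function.Injective e) {S : Set X}
    (hS : IsSigmaCompact (e '' S)) :
    ∃ C : ℕ → Set X, (∀ n, IsCompact (e '' C n)) ∧ S = ⋃ n, C n := by
  obtain ⟨K, hK, hKS⟩ := hS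
  have K_subset_range (n : ℕ) : K n ⊆ range e :=
    (subset_iUnion K n).trans (hKS.trans_subset (image_subset_range e S))
  refine ⟨fun n => e ⁻¹' K n, fun n => ?_, ?_⟩
  · rw [image_preimage_eq_of_subset (K_subset_range n)]
    exact hK n
  · rw [← preimage_iUnion, hKS, preimage_image_eq S he]

end Image

theorem chi_eq_true_iff {A : Set ℕ} {n : ℕ} : chi A n = true ↔ n ∈ A := by
  simp only [chi, decide_eq_true_eq]

theorem chi_setOfPred_eq_true (x : ℕ → Bool) : chi {n | x n = true} = x :=
  funext fun _ => Bool.eq_iff_iff.mpr chi_eq_true_iff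

theorem chi_bijective : Function.Bijective chi :=
  Function.bijective_iff_has_inverse.mpr
    ⟨fun x => {n | x n = true}, fun _ => ext fun _ => chi_eq_true_iff, chi_setOfPred_eq_true⟩

theorem isClosed_chi_image_setOfPred_mem (a : ℕ) : IsClosed (chi '' {H | a ∈ H}) := by
  have preimage_eq : {H | a ∈ H} = chi ⁻¹' {x | x a = true} := ext fun _ => chi_eq_true_iff.symm
  rw [preimage_eq, image_preimage_eq _ chi_bijective.surjective]
  exact isClosed_eq (continuous_apply a) continuous_const

theorem isClosed_chi_image_setOfPred_inter_nonempty (u : Finset ℕ) :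
    IsClosed (chi '' {H | (↑u ∩ H).Nonempty}) := by
  have eq_iUnion : {H : Set ℕ | (↑u ∩ H).Nonempty} = ⋃ a ∈ u, {H | a ∈ H} := by
    ext H
    simp only [Set.Nonempty, mem_inter_iff, Finset.mem_coe, mem_ofPred_eq, mem_iUnion, exists_prop]
  rw [eq_iUnion, image_iUnion₂]
  exact isClosed_biUnion_finset fun a _ => isClosed_chi_image_setOfPred_mem a

section gFn

variable {τ : Finset ℕ × ℕ → Option ℕ} {t : Finset ℕ}

theorem le_gFn_iff {G : Set ℕ} {m : ℕ} {c : ℕ∞} :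
    c ≤ gFn τ t G m ↔ ∀ s : Finset ℕ, ∀ v : ℕ, StrictEndExt t s → ↑(s \ t) ⊆ G →
      τ (s, m) = some v → c ≤ v := by
  have subset_iff (s : Finset ℕ) : ↑(s \ t) ⊆ G ↔ ∀ a ∈ s, a ∉ t → a ∈ G := by
    simp only [subset_def, Finset.mem_coe, Finset.mem_sdiff, and_imp]
  simp only [subset_iff, gFn, le_sInf_iff, mem_ofPred_eq]
  exact ⟨fun h s v hs hG hv => h v ⟨s, v, hs, hG, hv, rfl⟩,
    fun h _ ⟨s, v, hs, hG, hv, hx⟩ => hx ▸ h s v hs hG hv⟩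

theorem le_gFn_compl_iff {H : Set ℕ} {m : ℕ} {c : ℕ∞} :
    c ≤ gFn τ t Hᶜ m ↔ ∀ s : Finset ℕ, ∀ v : ℕ, StrictEndExt t s → τ (s, m) = some v →
      v < c → (↑(s \ t) ∩ H).Nonempty := by
  simp only [le_gFn_iff, subset_compl_iff_disjoint_right, ← not_disjoint_iff_nonempty_inter,
    ← not_le]
  grind

variable (τ t)

theorem isClosed_chi_image_setOfPred_le_gFn_compl (m : ℕ) (c : ℕ∞) :
    IsClosed (chi '' {H | c ≤ gFn τ t Hᶜ m}) := by
  simp only [le_gFn_compl_iff, ofPred_forall]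
  iterate 5 refine isClosed_image_iInter chi_bijective fun _ => ?_
  exact isClosed_chi_image_setOfPred_inter_nonempty _

theorem isCompact_chi_image_setOfPred_forall_le_gFn_compl (f : ℕ → ℕ∞) (m₀ : ℕ) :
    IsCompact (chi '' {H | ∀ m, m₀ ≤ m → f m ≤ gFn τ t Hᶜ m}) := by
  simp only [ofPred_forall]
  refine IsClosed.isCompact <| isClosed_image_iInter chi_bijective fun m =>
    isClosed_image_iInter chi_bijective fun _ => ?_
  exact isClosed_chi_image_setOfPred_le_gFn_compl τ t m (f m)

end gFn

theorem isSigmaCompact_H_general (τ : Finset ℕ × ℕ → Option ℕ) (f : ℕ → ℕ∞) :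
    IsSigmaCompact (chi '' {H : Set ℕ | ∃ t : Finset ℕ, ∃ m₀ : ℕ, ∀ m : ℕ, m₀ ≤ m →
      f m ≤ gFn τ t Hᶜ m}) := by
  simp only [ofPred_exists, image_iUnion]
  exact isSigmaCompact_iUnion _ fun t => isSigmaCompact_iUnion_of_isCompact _ fun m₀ =>
    isCompact_chi_image_setOfPred_forall_le_gFn_compl τ t f m₀

/-- The set `ℋ = {H | ∃ t, g_{t, ℕ∖H} ≥* f}` is σ-compact: a countable union of compact
subsets of `𝒫(ℕ)`. -/
theorem isSigmaCompact_H (τ : Finset ℕ × ℕ → Option ℕ) (f : ℕ → ℕ) :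
    ∃ C : ℕ → Set (Set ℕ), (∀ n : ℕ, IsCompact (chi '' C n)) ∧
      {H : Set ℕ | ∃ t : Finset ℕ, ∃ m₀ : ℕ, ∀ m : ℕ, m₀ ≤ m →
        (f m : ℕ∞) ≤ gFn τ t Hᶜ m} = ⋃ n : ℕ, C n :=
  exists_iUnion_eq_of_isSigmaCompact_image chi_bijective.injective
    (isSigmaCompact_H_general τ fun m => f m)
end
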